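/- Let Λ be a small category, viewed as a semigroupoid, and let S : Λ → B(H) be a representation on a Hilbert space H such that either S is nondegenerate or obj(Λ) is infinite. If for every object v of Λ and every finite covering H' of Λ^v one has ⋁_{h∈H'} P_h = P_v, then S is tight. -/

import Mathlib

/-!
In a representation of a small category, every object `v` is sent to an idempotent partial isometry
whose initial and final projections commute; such an element is self-adjoint, so `S v` is a
projection, and `P v = Q v = S v`. The projections of distinct objects are orthogonal,
`Q f = S (src f)`, and `P f ≤ S (rng f)`.

Take a finite covering of `Λ^{F,G'}`. If `F` contains some `f₀` with source `v`, then `Λ^{F,G'}` is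
either empty, in which case both sides of the tightness equation vanish by orthogonality, or equal
to `Λ^v`, in which case the equation is the hypothesis at `v`. If `F` is empty, the ranges of the
elements of the covering exhaust the objects which are not sources of elements of `G'`, so there
are only finitely many objects. Hence `S` is nondegenerate, and an operator is determined by its
products with the `S v` (`eq_of_mul_obj_eq`). Multiplying both sides of the equation by `S v` gives
`0` if `v` is a source of an element of `G'`, and `S v` otherwise; the latter is the hypothesis at
`v` applied to the elements of the covering which have range `v`.
-/

universe u

/-- A semigroupoid: a set with a partially defined associative operation
(Exel, Definition 2.1). -/
structure Semigroupoid (Λ : Type u) where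
  /-- the set of composable pairs -/
  D2 : Λ → Λ → Prop
  /-- the (partially meaningful) multiplication -/
  mul : Λ → Λ → Λ
  assoc₁ : ∀ f g h, D2 f g → D2 g h →
    D2 (mul f g) h ∧ D2 f (mul g h) ∧ mul (mul f g) h = mul f (mul g h)
  assoc₂ : ∀ f g h, D2 f g → D2 (mul f g) h →
    D2 g h ∧ D2 f (mul g h) ∧ mul (mul f g) h = mul f (mul g h)
  assoc₃ : ∀ f g h, D2 g h → D2 f (mul g h) →
    D2 f g ∧ D2 (mul f g) h ∧ mul (mul f g) h = mul f (mul g h)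

namespace Semigroupoid

variable {Λ : Type u} (G : Semigroupoid Λ)

/-- `f` divides `g` : either `f = g` or `f h = g` for some `h`. -/
def Divides (f g : Λ) : Prop := f = g ∨ ∃ h, G.D2 f h ∧ G.mul f h = g

/-- `f` and `g` intersect: they admit a common multiple. -/
def Intersects (f g : Λ) : Prop := ∃ m, G.Divides f m ∧ G.Divides g m

/-- `f` and `g` are disjoint: no common multiple. -/
def Disjnt (f g : Λ) : Prop := ¬ G.Intersects f g

/-- `Λ^f`, the set of elements composable with `f` on the right. -/
def lam (f : Λ) : Set Λ := {g | G.D2 f g}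

/-- A spring: an element `f` with `Λ^f = ∅`. -/
def IsSpring (f : Λ) : Prop := ∀ g, ¬ G.D2 f g

/-- `H` is a covering of `X`: `H ⊆ X` and every element of `X` intersects some element of `H`. -/
def IsCovering (H X : Set Λ) : Prop := H ⊆ X ∧ ∀ f ∈ X, ∃ h ∈ H, G.Intersects f h

/-- `H` is a partition of `X`: a covering whose elements are pairwise disjoint. -/
def IsPartition (H X : Set Λ) : Prop :=
  G.IsCovering H X ∧ ∀ h₁ ∈ H, ∀ h₂ ∈ H, h₁ ≠ h₂ → G.Disjnt h₁ h₂

/-- `Λ^{F,G'} = (⋂_{f∈F} Λ^f) ∩ (⋂_{g∈G'} (Λ \ Λ^g))`. -/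
def lamFG (F G' : Finset Λ) : Set Λ :=
  {h | (∀ f ∈ F, G.D2 f h) ∧ ∀ g ∈ G', ¬ G.D2 g h}

end Semigroupoid

section Repn

variable {Λ : Type u} {B : Type*} [Ring B] [StarRing B]

/-- initial projection -/
def QQ (S : Λ → B) (f : Λ) : B := star (S f) * S f

/-- final projection -/
def PP (S : Λ → B) (f : Λ) : B := S f * star (S f)

/-- A representation of a semigroupoid in a unital C*-algebra (Exel, Definition 4.1). -/
structure IsRepn (G : Semigroupoid Λ) (S : Λ → B) : Prop where
  partialIsometry : ∀ f, S f * star (S f) * S f = S f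
  map_comp : ∀ f g, G.D2 f g → S f * S g = S (G.mul f g)
  map_ncomp : ∀ f g, ¬ G.D2 f g → S f * S g = 0
  commQQ : ∀ f g, Commute (QQ S f) (QQ S g)
  commQP : ∀ f g, Commute (QQ S f) (PP S g)
  commPP : ∀ f g, Commute (PP S f) (PP S g)
  orthPP : ∀ f g, G.Disjnt f g → PP S f * PP S g = 0
  QdomP : ∀ f g, G.D2 f g → QQ S f * PP S g = PP S g

/-- the product `∏_{f ∈ F} T f` (of pairwise commuting elements), via a choice of order. -/
noncomputable def fprod (F : Finset Λ) (T : Λ → B) : B := (F.toList.map T).prod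

/-- the supremum `⋁_{h ∈ H} PP S h` of commuting final projections,
`P ∨ Q = P + Q - P Q`, i.e. `1 - ∏ (1 - P h)`. -/
noncomputable def joinP (H : Finset Λ) (S : Λ → B) : B := 1 - fprod H (fun h => 1 - PP S h)

/-- Tight representation (Exel, Definition 4.5). -/
def IsTight (G : Semigroupoid Λ) (S : Λ → B) : Prop :=
  ∀ (F G' H : Finset Λ), G.IsCovering ↑H (G.lamFG F G') →
    joinP H S = fprod F (QQ S) * fprod G' (fun g => 1 - QQ S g)

end Repn
/-- A small category, viewed as a semigroupoid whose elements are all its morphisms: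
`(f,g)` is composable iff `s f = r g`; objects are identified with identity morphisms. -/
structure CatSemigroupoid (Λ : Type u) extends Semigroupoid Λ where
  /-- source (domain) of a morphism, as an identity morphism -/
  src : Λ → Λ
  /-- range (codomain) of a morphism, as an identity morphism -/
  rng : Λ → Λ
  /-- the morphisms which are (identities on) objects -/
  IsObj : Λ → Prop
  obj_src : ∀ f, IsObj (src f)
  obj_rng : ∀ f, IsObj (rng f)
  src_obj : ∀ v, IsObj v → src v = v
  rng_obj : ∀ v, IsObj v → rng v = v
  comp_iff : ∀ f g, D2 f g ↔ src f = rng g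
  mul_src : ∀ f, mul f (src f) = f
  rng_mul' : ∀ f, mul (rng f) f = f
  src_mul : ∀ f g, D2 f g → src (mul f g) = src g
  rng_mul : ∀ f g, D2 f g → rng (mul f g) = rng f

namespace CatSemigroupoid

variable {Λ : Type u} (C : CatSemigroupoid Λ)

/-- for an object `v`, `Λ^v = {g : r g = v}`. -/
def lamObj (v : Λ) : Set Λ := {g | C.rng g = v}

end CatSemigroupoid
section Hilb

variable {Λ : Type u} {H : Type*} [NormedAddCommGroup H] [InnerProductSpace ℂ H] [CompleteSpace H]

/-- A representation on a Hilbert space is nondegenerate if the closed *-subalgebra of `B(H)`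
generated by its range acts nondegenerately on `H`. -/
def Nondegen (S : Λ → (H →L[ℂ] H)) : Prop :=
  (Submodule.span ℂ {y : H | ∃ a ∈ (NonUnitalStarAlgebra.adjoin ℂ
      (Set.range S)).topologicalClosure, ∃ x : H, a x = y}).topologicalClosure = ⊤

end Hilb

/-! ### Products over lists -/

section ListProd

variable {α : Type*} {B : Type*} [Ring B]

lemma list_prod_mul_fix (l : List α) (T : α → B) (X : B) (h : ∀ a ∈ l, T a * X = X) :
    (l.map T).prod * X = X := by
  induction l with
  | nil => simp
  | cons a l ih =>
    rw [List.map_cons, List.prod_cons, mul_assoc, ih fun b hb => h b (List.mem_cons_of_mem _ hb),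
      h a List.mem_cons_self]

lemma list_prod_mul_zero (l : List α) (T : α → B) (X : B) (hc : ∀ a, Commute (T a) X)
    (h : ∃ a ∈ l, T a * X = 0) : (l.map T).prod * X = 0 := by
  induction l with
  | nil => simp at h
  | cons a l ih =>
    rw [List.map_cons, List.prod_cons, mul_assoc]
    obtain ⟨b, hb, hX⟩ := h
    rcases List.mem_cons.1 hb with rfl | hb
    · have hcl : Commute X (l.map T).prod := by
        refine Commute.list_prod_right _ _ fun y hy => ?_
        obtain ⟨c, -, rfl⟩ := List.mem_map.1 hy
        exact (hc c).symm
      rw [← hcl.eq, ← mul_assoc, hX, zero_mul]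
    · rw [ih ⟨b, hb, hX⟩, mul_zero]

/-- Factors acting trivially on `X` may be dropped from a product which is multiplied by `X`. -/
lemma list_prod_mul_filter (l : List α) (p : α → Prop) [DecidablePred p] (T : α → B) (X : B)
    (hc : ∀ a, Commute (T a) X) (h : ∀ a, ¬ p a → T a * X = X) :
    (l.map T).prod * X = ((l.filter p).map T).prod * X := by
  induction l with
  | nil => simp
  | cons a l ih =>
    by_cases hp : p a
    · simp only [List.map_cons, List.prod_cons, mul_assoc, ih, hp, decide_true,
        List.filter_cons_of_pos]
    · have hcl : Commute X ((l.filter p).map T).prod := by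
        refine Commute.list_prod_right _ _ fun y hy => ?_
        obtain ⟨c, -, rfl⟩ := List.mem_map.1 hy
        exact (hc c).symm
      rw [List.filter_cons_of_neg (by simpa using hp), List.map_cons, List.prod_cons, mul_assoc,
        ih, ← hcl.eq, ← mul_assoc, h a hp]

lemma fprod_filter_mul (F : Finset α) (p : α → Prop) [DecidablePred p] (T : α → B) (X : B)
    (hT : ∀ a b, Commute (T a) (T b)) (hc : ∀ a, Commute (T a) X)
    (h : ∀ a, ¬ p a → T a * X = X) : fprod F T * X = fprod (F.filter p) T * X := by
  have hperm : (F.toList.filter p).Perm (F.filter p).toList := by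
    rw [List.perm_ext_iff_of_nodup (F.nodup_toList.filter _) (Finset.nodup_toList _)]
    simp
  unfold fprod
  rw [list_prod_mul_filter _ p T X hc h]
  congr 1
  refine (hperm.map T).prod_eq' ?_
  rw [List.pairwise_map]
  exact List.pairwise_of_forall fun a b => hT a b

end ListProd

/-! ### Objects and projections -/

section Objects

variable {Λ : Type u} {B : Type*} [Ring B] [StarRing B] {C : CatSemigroupoid Λ} {S : Λ → B}

lemma rng_eq_of_divides {f m : Λ} (h : C.toSemigroupoid.Divides f m) : C.rng m = C.rng f := by
  rcases h with rfl | ⟨k, hk, rfl⟩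
  · rfl
  · exact C.rng_mul f k hk

lemma rng_eq_of_intersects {f g : Λ} (h : C.toSemigroupoid.Intersects f g) :
    C.rng f = C.rng g := by
  obtain ⟨m, h₁, h₂⟩ := h
  rw [← rng_eq_of_divides h₁, rng_eq_of_divides h₂]

lemma D2_src (C : CatSemigroupoid Λ) (f : Λ) : C.D2 f (C.src f) :=
  (C.comp_iff _ _).2 (C.rng_obj _ (C.obj_src f)).symm

lemma D2_rng (C : CatSemigroupoid Λ) (f : Λ) : C.D2 (C.rng f) f :=
  (C.comp_iff _ _).2 (C.src_obj _ (C.obj_rng f))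

lemma obj_idem (hS : IsRepn C.toSemigroupoid S) {v : Λ} (hv : C.IsObj v) : S v * S v = S v := by
  have h1 := D2_src C v
  have h2 := C.mul_src v
  rw [C.src_obj v hv] at h1 h2
  rw [hS.map_comp v v h1, h2]

/-- For an idempotent partial isometry `s`, commutation of `s s*` with `s* s` reads `s = s*`. -/
lemma obj_star (hS : IsRepn C.toSemigroupoid S) {v : Λ} (hv : C.IsObj v) : star (S v) = S v := by
  have hi := obj_idem hS hv
  have hi' : star (S v) * star (S v) = star (S v) := by rw [← star_mul, hi]
  have hp := hS.partialIsometry v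
  have hp' : star (S v) * S v * star (S v) = star (S v) := by
    simpa [mul_assoc] using congrArg star hp
  have hc := (hS.commQP v v).eq
  unfold QQ PP at hc
  calc star (S v) = star (S v) * (S v * S v) * star (S v) := by rw [hi, hp']
    _ = star (S v) * S v * (S v * star (S v)) := by simp only [mul_assoc]
    _ = S v * star (S v) * (star (S v) * S v) := hc
    _ = S v * (star (S v) * star (S v)) * S v := by simp only [mul_assoc]
    _ = S v := by rw [hi', hp]

lemma PP_obj (hS : IsRepn C.toSemigroupoid S) {v : Λ} (hv : C.IsObj v) : PP S v = S v := by
  rw [PP, obj_star hS hv, obj_idem hS hv]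

lemma QQ_eq (hS : IsRepn C.toSemigroupoid S) (f : Λ) : QQ S f = S (C.src f) := by
  have h := hS.QdomP f _ (D2_src C f)
  rwa [PP_obj hS (C.obj_src f), QQ, mul_assoc, hS.map_comp _ _ (D2_src C f), C.mul_src] at h

lemma obj_orth (hS : IsRepn C.toSemigroupoid S) {v w : Λ} (hv : C.IsObj v) (hw : C.IsObj w)
    (h : v ≠ w) : S v * S w = 0 := by
  apply hS.map_ncomp
  rwa [C.comp_iff, C.src_obj v hv, C.rng_obj w hw]

lemma rng_mul_S (hS : IsRepn C.toSemigroupoid S) (f : Λ) : S (C.rng f) * S f = S f := by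
  rw [hS.map_comp _ _ (D2_rng C f), C.rng_mul']

lemma src_mul_star (hS : IsRepn C.toSemigroupoid S) (f : Λ) :
    S (C.src f) * star (S f) = star (S f) := by
  have h : S f * S (C.src f) = S f := by rw [hS.map_comp _ _ (D2_src C f), C.mul_src]
  simpa [obj_star hS (C.obj_src f)] using congrArg star h

lemma commute_PP_obj (hS : IsRepn C.toSemigroupoid S) (f : Λ) {v : Λ} (hv : C.IsObj v) :
    Commute (PP S f) (S v) := by
  simpa [PP_obj hS hv] using hS.commPP f v

lemma commute_QQ_obj (hS : IsRepn C.toSemigroupoid S) (f : Λ) {v : Λ} (hv : C.IsObj v) :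
    Commute (QQ S f) (S v) := by
  simpa [PP_obj hS hv] using hS.commQP f v

lemma PP_mul_obj_of_ne (hS : IsRepn C.toSemigroupoid S) {f v : Λ} (hv : C.IsObj v)
    (h : C.rng f ≠ v) : PP S f * S v = 0 := by
  rw [(commute_PP_obj hS f hv).eq, PP, ← rng_mul_S hS f, ← mul_assoc, ← mul_assoc,
    obj_orth hS hv (C.obj_rng f) h.symm, zero_mul, zero_mul]

lemma QQ_mul_obj_of_ne (hS : IsRepn C.toSemigroupoid S) {f v : Λ} (hv : C.IsObj v)
    (h : C.src f ≠ v) : QQ S f * S v = 0 := by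
  rw [QQ_eq hS, obj_orth hS (C.obj_src f) hv h]

lemma QQ_mul_obj_of_eq (hS : IsRepn C.toSemigroupoid S) {f v : Λ} (hv : C.IsObj v)
    (h : C.src f = v) : QQ S f * S v = S v := by
  rw [QQ_eq hS, h, obj_idem hS hv]

lemma fprod_G_mul_obj (hS : IsRepn C.toSemigroupoid S) (G' : Finset Λ) {v : Λ}
    (hv : C.IsObj v) (h : ∀ g ∈ G', C.src g ≠ v) :
    fprod G' (fun g => 1 - QQ S g) * S v = S v := by
  refine list_prod_mul_fix _ _ _ fun g hg => ?_
  rw [sub_mul, one_mul, QQ_mul_obj_of_ne hS hv (h g (Finset.mem_toList.1 hg)), sub_zero]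

lemma fprod_G_mul_obj_zero (hS : IsRepn C.toSemigroupoid S) (G' : Finset Λ) {v : Λ}
    (hv : C.IsObj v) (h : ∃ g ∈ G', C.src g = v) :
    fprod G' (fun g => 1 - QQ S g) * S v = 0 := by
  obtain ⟨g, hg, hgv⟩ := h
  refine list_prod_mul_zero _ _ _
    (fun a => (Commute.one_left _).sub_left (commute_QQ_obj hS a hv)) ⟨g, by simpa using hg, ?_⟩
  rw [sub_mul, one_mul, QQ_mul_obj_of_eq hS hv hgv, sub_self]

lemma fprod_G_commute (hS : IsRepn C.toSemigroupoid S) (G' : Finset Λ) {v : Λ}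
    (hv : C.IsObj v) : Commute (S v) (fprod G' (fun g => 1 - QQ S g)) := by
  refine Commute.list_prod_right _ _ fun y hy => ?_
  obtain ⟨a, -, rfl⟩ := List.mem_map.1 hy
  exact ((Commute.one_left _).sub_left (commute_QQ_obj hS a hv)).symm

end Objects

/-! ### Nondegeneracy -/

section Nondegenerate

variable {Λ : Type u} {H : Type*} [NormedAddCommGroup H] [InnerProductSpace ℂ H] [CompleteSpace H]
  {C : CatSemigroupoid Λ} {S : Λ → H →L[ℂ] H}

/-- In a nondegenerate representation the ranges of the projections `S v` span a dense subspace,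
so an operator is determined by its products with them. -/
lemma eq_of_mul_obj_eq (hS : IsRepn C.toSemigroupoid S) (hnd : Nondegen S) {X Y : H →L[ℂ] H}
    (h : ∀ v, C.IsObj v → X * S v = Y * S v) : X = Y := by
  have hadj : ∀ a ∈ NonUnitalStarAlgebra.adjoin ℂ (Set.range S), X * a = Y * a := by
    intro a ha
    rw [← NonUnitalStarSubalgebra.mem_toNonUnitalSubalgebra,
      NonUnitalStarAlgebra.adjoin_toNonUnitalSubalgebra] at ha
    induction ha using NonUnitalAlgebra.adjoin_induction with
    | mem a ha =>
      rcases ha with ⟨f, rfl⟩ | ⟨f, hf⟩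
      · rw [← rng_mul_S hS f, ← mul_assoc, ← mul_assoc, h _ (C.obj_rng f)]
      · have ha : a = star (S f) := by rw [hf, star_star]
        rw [ha, ← src_mul_star hS f, ← mul_assoc, ← mul_assoc, h _ (C.obj_src f)]
    | add a b _ _ ha hb => rw [mul_add, mul_add, ha, hb]
    | zero => simp
    | mul a b _ _ ha _ => rw [← mul_assoc, ← mul_assoc, ha]
    | smul c a _ ha => rw [mul_smul_comm, mul_smul_comm, ha]
  have hcl : ∀ a ∈ (NonUnitalStarAlgebra.adjoin ℂ (Set.range S)).topologicalClosure,
      X * a = Y * a := by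
    intro a ha
    have hclosed : IsClosed {a : H →L[ℂ] H | X * a = Y * a} :=
      isClosed_eq (continuous_const.mul continuous_id) (continuous_const.mul continuous_id)
    exact closure_minimal hadj hclosed ha
  have hd := (Submodule.dense_iff_topologicalClosure_eq_top).2 hnd
  refine ContinuousLinearMap.ext_on hd ?_
  rintro y ⟨a, ha, x, rfl⟩
  exact congrArg (fun T : H →L[ℂ] H => T x) (hcl a ha)

end Nondegenerate

/-- For a nondegenerate (or infinite-object) representation of a small category on a
Hilbert space, the covering condition at objects implies tightness. -/
theorem cat_cover_join_implies_tight {Λ : Type u} {H : Type*} [NormedAddCommGroup H]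
    [InnerProductSpace ℂ H] [CompleteSpace H]
    (C : CatSemigroupoid Λ) {S : Λ → H →L[ℂ] H} (hS : IsRepn C.toSemigroupoid S)
    (hnd : Nondegen S ∨ (setOf C.IsObj).Infinite)
    (hcov : ∀ v, C.IsObj v → ∀ H' : Finset Λ,
      C.toSemigroupoid.IsCovering ↑H' (C.lamObj v) → joinP H' S = PP S v) :
    IsTight C.toSemigroupoid S := by
  classical
  intro F G' K hK
  have hKsub := hK.1
  have hKcov := hK.2
  rcases F.eq_empty_or_nonempty with rfl | ⟨f₀, hf₀⟩
  · have hFG : ∀ h, h ∈ C.toSemigroupoid.lamFG ∅ G' ↔ ∀ g ∈ G', C.src g ≠ C.rng h := by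
      intro h
      simp [Semigroupoid.lamFG, C.comp_iff]
    -- Every object is a source of an element of `G'` or the range of an element of `K`.
    have hnd' : Nondegen S := by
      refine hnd.resolve_right fun hinf => hinf ?_
      refine (G'.image C.src ∪ K.image C.rng).finite_toSet.subset fun v hv => ?_
      have hv : C.IsObj v := hv
      by_cases hg : ∃ g ∈ G', C.src g = v
      · obtain ⟨g, hg, rfl⟩ := hg
        simp only [Finset.coe_union, Finset.coe_image]
        exact Or.inl ⟨g, hg, rfl⟩
      · push Not at hg
        obtain ⟨k, hk, hi⟩ := hKcov v ((hFG v).2 (by rwa [C.rng_obj v hv]))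
        have hr := rng_eq_of_intersects hi
        rw [C.rng_obj v hv] at hr
        simp only [Finset.coe_union, Finset.coe_image]
        exact Or.inr ⟨k, hk, hr.symm⟩
    refine eq_of_mul_obj_eq hS hnd' fun v hv => ?_
    have hone : fprod (∅ : Finset Λ) (QQ S) = 1 := by simp [fprod]
    rw [hone, one_mul, joinP, sub_mul, one_mul]
    by_cases hg : ∃ g ∈ G', C.src g = v
    · rw [fprod_G_mul_obj_zero hS G' hv hg, sub_eq_zero, eq_comm]
      refine list_prod_mul_fix _ _ _ fun k hk => ?_
      have hkv : C.rng k ≠ v := by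
        rintro rfl
        obtain ⟨g, hg, hgv⟩ := hg
        exact (hFG k).1 (hKsub (by simpa using hk)) g hg hgv
      rw [sub_mul, one_mul, PP_mul_obj_of_ne hS hv hkv, sub_zero]
    · push Not at hg
      rw [fprod_G_mul_obj hS G' hv hg]
      have hKv : C.toSemigroupoid.IsCovering ↑(K.filter fun k => C.rng k = v)
          (C.lamObj v) := by
        refine ⟨fun k hk => (Finset.mem_filter.1 hk).2, fun f hf => ?_⟩
        have hf : C.rng f = v := hf
        obtain ⟨k, hk, hi⟩ := hKcov f ((hFG f).2 (by rwa [hf]))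
        exact ⟨k, Finset.mem_filter.2 ⟨hk, by rw [← rng_eq_of_intersects hi, hf]⟩, hi⟩
      have hj := hcov v hv _ hKv
      rw [joinP, PP_obj hS hv, sub_eq_iff_eq_add, ← sub_eq_iff_eq_add'] at hj
      rw [fprod_filter_mul K (fun k => C.rng k = v), ← hj, sub_mul, one_mul, obj_idem hS hv,
        sub_self, sub_zero]
      · intro a b
        exact ((Commute.one_left _).sub_left
          ((Commute.one_right _).sub_right (hS.commPP a b)))
      · exact fun a => (Commute.one_left _).sub_left (commute_PP_obj hS a hv)
      · intro a ha
        rw [sub_mul, one_mul, PP_mul_obj_of_ne hS hv ha, sub_zero]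
  · obtain ⟨v, hv₀⟩ : ∃ v, C.src f₀ = v := ⟨_, rfl⟩
    have hv : C.IsObj v := hv₀ ▸ C.obj_src f₀
    have hFv : fprod F (QQ S) * S v = fprod F (QQ S) := by
      have h0 : fprod F (QQ S) * (1 - S v) = 0 := by
        refine list_prod_mul_zero _ _ _
          (fun a => (Commute.one_right _).sub_right (commute_QQ_obj hS a hv))
          ⟨f₀, by simpa using hf₀, ?_⟩
        rw [QQ_eq hS, hv₀, mul_sub, mul_one, obj_idem hS hv, sub_self]
      rw [mul_sub, mul_one, sub_eq_zero] at h0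
      exact h0.symm
    have hFG : fprod F (QQ S) * fprod G' (fun g => 1 - QQ S g) =
        fprod F (QQ S) * (fprod G' (fun g => 1 - QQ S g) * S v) := by
      rw [← (fprod_G_commute hS G' hv).eq, ← mul_assoc, hFv]
    have hempty : (∀ h, h ∉ C.toSemigroupoid.lamFG F G') → joinP K S = 0 := by
      intro he
      have : K = ∅ := Finset.eq_empty_of_forall_notMem fun k hk => he k (hKsub hk)
      simp [this, joinP, fprod]
    by_cases hbad : ∃ f ∈ F, C.src f ≠ v
    · obtain ⟨f, hf, hfv⟩ := hbad
      rw [hempty, ← hFv]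
      · have hz : fprod F (QQ S) * S v = 0 :=
          list_prod_mul_zero _ _ _ (fun a => commute_QQ_obj hS a hv)
            ⟨f, by simpa using hf, QQ_mul_obj_of_ne hS hv hfv⟩
        rw [hz, zero_mul]
      · intro h hh
        have h1 := (C.comp_iff _ _).1 (hh.1 f hf)
        have h2 := (C.comp_iff _ _).1 (hh.1 f₀ hf₀)
        exact hfv (by rw [h1, ← h2, hv₀])
    push Not at hbad
    by_cases hg : ∃ g ∈ G', C.src g = v
    · rw [hFG, fprod_G_mul_obj_zero hS G' hv hg, mul_zero]
      refine hempty fun h hh => ?_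
      obtain ⟨g, hg, hgv⟩ := hg
      refine hh.2 g hg ((C.comp_iff _ _).2 ?_)
      rw [hgv, ← hv₀]
      exact (C.comp_iff _ _).1 (hh.1 f₀ hf₀)
    · push Not at hg
      have hset : C.toSemigroupoid.lamFG F G' = C.lamObj v := by
        ext h
        constructor
        · intro hh
          have h2 := (C.comp_iff _ _).1 (hh.1 f₀ hf₀)
          exact h2.symm.trans hv₀
        · intro (hh : C.rng h = v)
          refine ⟨fun f hf => (C.comp_iff _ _).2 (by rw [hbad f hf, hh]), fun g hg' hd => ?_⟩
          exact hg g hg' (((C.comp_iff _ _).1 hd).trans hh)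
      rw [hFG, fprod_G_mul_obj hS G' hv hg, hcov v hv K (hset ▸ hK), PP_obj hS hv]
      exact (list_prod_mul_fix _ _ _ fun f hf =>
        QQ_mul_obj_of_eq hS hv (hbad f (by simpa using hf))).symm
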